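/- Let f ∈ ℂ[x₁,…,x_{n+1}] be a strongly tame polynomial of weighted degree d with homogenization F, and let the monomials x^β, β ∈ I, be a ℂ-basis of V_g. Then for all but finitely many b ∈ ℂ, the monomials x₀^j·x^β with β ∈ I and 0 ≤ j ≤ d − 2 form a ℂ-basis of ℂ[x₀,x]/⟨∂F_b/∂x₀, ∂F_b/∂x₁, …, ∂F_b/∂x_{n+1}⟩, where F_b := F − b·x₀^d (i.e., one can take d_β = d − 1 for all β for a generic b). -/

import Mathlib

open MvPolynomial

noncomputable section

/-- The homogenization `F = Σ_{i=0}^d fᵢ·x₀^{d-i}` of `f`. -/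
def homogenization (n d : ℕ) (α : Fin (n + 1) → ℕ)
    (f : MvPolynomial (Fin (n + 1)) ℂ) : MvPolynomial (Fin (n + 2)) ℂ :=
  ∑ i ∈ Finset.range (d + 1),
    rename Fin.succ (weightedHomogeneousComponent α i f) * X 0 ^ (d - i)

/-- The ideal generated by all partial derivatives of `F_b = F - b·x₀^d`. -/
def fullJacobianIdeal (n d : ℕ) (α : Fin (n + 1) → ℕ)
    (f : MvPolynomial (Fin (n + 1)) ℂ) (b : ℂ) : Ideal (MvPolynomial (Fin (n + 2)) ℂ) :=
  Ideal.span (Set.range fun i : Fin (n + 2) =>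
    pderiv i (homogenization n d α f - C b * X 0 ^ d))

/-!
Let `F` be the homogenization of `f` and `J = ⟨∂F/∂x₁, …, ∂F/∂xₙ₊₁⟩`. At `x₀ = 0` the generators of
`J` restrict to the derivatives of `g`, so `x₀, ∂F/∂x₁, …, ∂F/∂xₙ₊₁` vanish together only at the
origin. By the Nullstellensatz the ideal they generate contains powers of all `n + 2` variables,
a regular sequence as long as the list of generators, hence the Koszul complex of the generators is
exact and `x₀` is a nonzerodivisor modulo `J`. Therefore `ℂ[x₀, x]/J` is free over `ℂ[x₀]` on the
monomials `x^β`, `β ∈ I`.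

It remains to divide by `∂F_b/∂x₀ = P - c x₀^r`, where `P = ∂F/∂x₀`, `r = d - 1` and `c = b d`.
Let `D` be division by `x₀^r` in the `ℂ`-basis `x₀^j x^β`; its kernel is spanned by the monomials
with `j < r`. They form a basis of the quotient as soon as `D (P - c x₀^r) = D P - c` is bijective.
The operator `D P` preserves the weighted degree, whose pieces are finite-dimensional, and commutes
with `x₀` in large degrees, so its characteristic polynomial on the sum of finitely many pieces
annihilates it everywhere: its spectrum is finite.
-/

open RingTheory.Sequence Pointwise
open Matrix (vecCons)

/-! ### The Koszul complex of a sequence containing a regular sequence in its span -/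

section Koszul

variable {R : Type*} [CommRing R]

variable (R) in
/-- Exactness at degree `q + 1` of the Koszul complex of `g` with coefficients in `M`, realised as
the complex of alternating maps `E × ⋯ × E → M` whose differential is contraction with `g`. -/
def KoszulExactAt {E : Type*} [AddCommGroup E] [Module R E] (g : E)
    (M : Type*) [AddCommGroup M] [Module R M] (q : ℕ) : Prop :=
  ∀ ω : E [⋀^Fin (q + 1)]→ₗ[R] M, ω.curryLeft g = 0 →
    ∃ η : E [⋀^Fin (q + 2)]→ₗ[R] M, η.curryLeft g = ω

section

variable {E M : Type*} [AddCommGroup E] [Module R E] [AddCommGroup M] [Module R M]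

theorem exists_compAlternatingMap_eq_of_surjective [Module.Free R E] {N : Type*} [AddCommGroup N]
    [Module R N] {f : M →ₗ[R] N} (hf : Function.Surjective f) {q : ℕ}
    (ω : E [⋀^Fin q]→ₗ[R] N) : ∃ η : E [⋀^Fin q]→ₗ[R] M, f.compAlternatingMap η = ω := by
  obtain ⟨h, hh⟩ := Module.projective_lifting_property f
    (exteriorPower.alternatingMapLinearEquiv ω) hf
  refine ⟨exteriorPower.alternatingMapLinearEquiv.symm h,
    exteriorPower.alternatingMapLinearEquiv.injective ?_⟩
  rw [exteriorPower.alternatingMapLinearEquiv_comp, LinearEquiv.apply_symm_apply, hh]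

theorem exists_smul_eq_of_forall_mem_smul_top [Module.Free R E] {y : R} {q : ℕ}
    {ω : E [⋀^Fin q]→ₗ[R] M} (hω : ∀ v, ω v ∈ y • (⊤ : Submodule R M)) :
    ∃ ζ : E [⋀^Fin q]→ₗ[R] M, y • ζ = ω := by
  have hrange (v : Fin q → E) : ω v ∈ LinearMap.range (LinearMap.lsmul R M y) := by
    obtain ⟨m, -, hm⟩ := (Submodule.mem_smul_pointwise_iff_exists _ _ _).1 (hω v)
    exact ⟨m, hm⟩
  obtain ⟨ζ, hζ⟩ := exists_compAlternatingMap_eq_of_surjective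
    (LinearMap.lsmul R M y).surjective_rangeRestrict (ω.codRestrict _ hrange)
  exact ⟨ζ, AlternatingMap.ext fun v => congrArg Subtype.val (DFunLike.congr_fun hζ v)⟩

theorem curryLeft_alternatizeUncurryFin_smulRight (ℓ : E →ₗ[R] R) {g : E} {q : ℕ}
    {ω : E [⋀^Fin (q + 1)]→ₗ[R] M} (hω : ω.curryLeft g = 0) :
    (AlternatingMap.alternatizeUncurryFin (ℓ.smulRight ω)).curryLeft g = ℓ g • ω := by
  ext v
  have hvanish (i : Fin (q + 1)) : ω (i.succ.removeNth (Matrix.vecCons g v)) = 0 := by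
    have : i.succ.removeNth (Matrix.vecCons g v) = Matrix.vecCons g (i.removeNth v) := by
      ext j; cases j using Fin.cases <;> simp [Fin.removeNth]
    rw [this]
    exact DFunLike.congr_fun hω _
  simp [AlternatingMap.alternatizeUncurryFin_apply, Fin.sum_univ_succ, hvanish]

-- `ℓ ∧ ω` contracts to `ℓ g • ω`, so it is closed, hence exact, modulo `ℓ g`; subtracting a lift of
-- the primitive leaves a form divisible by `ℓ g`.
theorem KoszulExactAt.of_quotSMulTop [Module.Free R E] {g : E} (ℓ : E →ₗ[R] R)
    (hreg : IsSMulRegular M (ℓ g)) {q : ℕ}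
    (h : KoszulExactAt R g (QuotSMulTop (ℓ g) M) (q + 1)) : KoszulExactAt R g M q := by
  intro ω hω
  set wedge := AlternatingMap.alternatizeUncurryFin (ℓ.smulRight ω)
  have hwedge : wedge.curryLeft g = ℓ g • ω := curryLeft_alternatizeUncurryFin_smulRight ℓ hω
  let mk : M →ₗ[R] QuotSMulTop (ℓ g) M := Submodule.mkQ _
  have hclosed : (mk.compAlternatingMap wedge).curryLeft g = 0 := by
    ext v
    rw [AlternatingMap.curryLeft_compAlternatingMap, hwedge]
    exact (Submodule.Quotient.mk_eq_zero _).2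
      (Submodule.smul_mem_pointwise_smul (ω v) (ℓ g) ⊤ trivial)
  obtain ⟨η', hη'⟩ := h _ hclosed
  obtain ⟨η, rfl⟩ := exists_compAlternatingMap_eq_of_surjective (Submodule.mkQ_surjective _) η'
  obtain ⟨ζ, hζ⟩ : ∃ ζ, ℓ g • ζ = wedge - η.curryLeft g :=
    exists_smul_eq_of_forall_mem_smul_top fun v =>
      (Submodule.Quotient.eq _).1 (DFunLike.congr_fun hη' v).symm
  refine ⟨ζ, AlternatingMap.ext fun v => hreg ?_⟩
  calc ℓ g • ζ.curryLeft g v = (wedge - η.curryLeft g).curryLeft g v := by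
        rw [← hζ]; rfl
    _ = wedge.curryLeft g v - (η.curryLeft g).curryLeft g v := rfl
    _ = ℓ g • ω v := by simp [hwedge]

end

theorem koszulExactAt_of_card_le {ι : Type*} [Fintype ι] (g : ι → R) (M : Type*) [AddCommGroup M]
    [Module R M] {q : ℕ} (hq : Fintype.card ι ≤ q) : KoszulExactAt R g M q := by
  refine fun ω _ => ⟨0, (Pi.basisFun R ι).ext_alternating fun v hv => ?_⟩
  have := Fintype.card_le_of_injective v hv
  simp only [Fintype.card_fin] at this
  omega

theorem koszulExactAt_of_isWeaklyRegular {ι : Type*} [Fintype ι] (g : ι → R) {rs : List R}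
    (hrs : ∀ r ∈ rs, r ∈ Ideal.span (Set.range g)) {M : Type*} [AddCommGroup M]
    [Module R M] (hM : IsWeaklyRegular M rs) {q : ℕ} (hq : Fintype.card ι ≤ rs.length + q) :
    KoszulExactAt R g M q := by
  induction rs generalizing M q with
  | nil => exact koszulExactAt_of_card_le g M (by simpa using hq)
  | cons r rs ih =>
    obtain ⟨hr, hrs'⟩ := (isWeaklyRegular_cons_iff M r rs).1 hM
    obtain ⟨a, ha⟩ := Ideal.mem_span_range_iff_exists_fun.1 (hrs r List.mem_cons_self)
    have hℓ : Fintype.linearCombination R a g = r := by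
      simp [← ha, Fintype.linearCombination_apply, mul_comm]
    subst hℓ
    refine .of_quotSMulTop _ hr (ih (fun s hs => hrs s (List.mem_cons_of_mem _ hs)) hrs' ?_)
    simp only [List.length_cons] at hq
    omega

theorem isSMulRegular_quotient_span_range_of_isWeaklyRegular {n : ℕ} {g : Fin n → R} {y : R}
    {rs : List R} (hrs : IsWeaklyRegular R rs)
    (hmem : ∀ r ∈ rs, r ∈ Ideal.span (insert y (Set.range g))) (hlen : n < rs.length) :
    IsSMulRegular (R ⧸ Ideal.span (Set.range g)) y := by
  have hexact : KoszulExactAt R (Fin.cons y g : Fin (n + 1) → R) R 0 := by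
    refine koszulExactAt_of_isWeaklyRegular _ ?_ hrs (by simpa)
    simpa [Fin.range_cons] using hmem
  rw [isSMulRegular_quotient_iff_mem_of_smul_mem]
  intro p hp
  obtain ⟨a, ha⟩ := Ideal.mem_span_range_iff_exists_fun.1 hp
  let ω : (Fin (n + 1) → R) [⋀^Fin 1]→ₗ[R] R := AlternatingMap.ofSubsingleton R _ R 0
    (Fintype.linearCombination R (Fin.cons p (-a)))
  have hω : ω.curryLeft (Fin.cons y g) = 0 := by
    ext v
    simp only [AlternatingMap.curryLeft_apply_apply, ω]
    simp [Fintype.linearCombination_apply, Fin.sum_univ_succ, mul_comm _ (a _), ha]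
  obtain ⟨η, hη⟩ := hexact ω hω
  let e (i : Fin (n + 1)) : Fin (n + 1) → R := Pi.single i 1
  let ηe : (Fin (n + 1) → R) →ₗ[R] R := η.toMultilinearMap.toLinearMap ![0, e 0] 0
  have hηe (x : Fin (n + 1) → R) : ηe x = η ![x, e 0] :=
    congrArg η (Fin.update_cons_zero (α := fun _ => Fin (n + 1) → R) 0 ![e 0] x)
  have hdiag : ηe (e 0) = 0 := hηe _ ▸ η.map_eq_zero_of_eq _ (i := 0) (j := 1) rfl zero_ne_one
  have hp_eq : p = ∑ i, ηe (e i.succ) * g i := by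
    calc p = ω ![e 0] := by simp [ω, e, Fintype.linearCombination_apply, Fin.sum_univ_succ]
      _ = ηe (Fin.cons y g) := by rw [← hη, hηe]; rfl
      _ = ηe (∑ i, (Fin.cons y g : Fin (n + 1) → R) i • e i) := by rw [← pi_eq_sum_univ']
      _ = ∑ i, ηe (e i.succ) * g i := by simp [Fin.sum_univ_succ, hdiag, mul_comm]
  exact hp_eq ▸ Ideal.sum_mem _ fun i _ => Ideal.mul_mem_left _ _ (Ideal.subset_span ⟨i, rfl⟩)

end Koszul

/-! ### Tame sequences of polynomials -/

theorem isSMulRegular_X_pow_quotient_span_monomial {σ R : Type*} [CommRing R] {s : Set (σ →₀ ℕ)}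
    {i : σ} (hs : ∀ t ∈ s, t i = 0) (m : ℕ) :
    IsSMulRegular (MvPolynomial σ R ⧸ Ideal.span ((fun t => monomial t (1 : R)) '' s))
      (X i ^ m : MvPolynomial σ R) := by
  rw [isSMulRegular_quotient_iff_mem_of_smul_mem]
  intro p hp
  rw [mem_ideal_span_monomial_image] at hp ⊢
  intro u hu
  obtain ⟨t, ht, htu⟩ := hp (Finsupp.single i m + u) (by
    rw [X_pow_eq_monomial, smul_eq_mul, mem_support_iff, coeff_monomial_mul, one_mul]
    exact mem_support_iff.1 hu)
  refine ⟨t, ht, fun j => ?_⟩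
  rcases eq_or_ne j i with rfl | hj
  · simp [hs t ht]
  · simpa [hj.symm] using htu j

theorem isWeaklyRegular_map_X_pow {σ : Type*} (R : Type*) [CommRing R] {l : List σ} (hl : l.Nodup)
    (m : σ → ℕ) :
    IsWeaklyRegular (MvPolynomial σ R) (l.map fun i => (X i ^ m i : MvPolynomial σ R)) := by
  refine ⟨fun k hk => ?_⟩
  have hspan : Ideal.ofList ((l.map fun i => (X i ^ m i : MvPolynomial σ R)).take k) =
      Ideal.span ((fun t => monomial t (1 : R)) ''
        {t | ∃ i ∈ l.take k, Finsupp.single i (m i) = t}) := by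
    rw [← List.map_take, Ideal.ofList]
    congr 1
    ext p
    simp only [X_pow_eq_monomial, List.mem_map, Set.mem_image, Set.mem_ofPred_eq,
      exists_exists_and_eq_and]
  rw [smul_eq_mul, Ideal.mul_top, hspan, List.getElem_map]
  refine isSMulRegular_X_pow_quotient_span_monomial ?_ _
  rintro _ ⟨i, hi, rfl⟩
  obtain ⟨j, hj, rfl⟩ := List.mem_take_iff_getElem.1 hi
  refine Finsupp.single_eq_of_ne fun h => ?_
  have := hl.getElem_inj_iff.1 h
  omega

theorem exists_X_pow_mem_span {σ k : Type*} [Finite σ] [Field k] [IsAlgClosed k]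
    {s : Set (MvPolynomial σ k)} (hs : ∀ x : σ → k, (∀ p ∈ s, eval x p = 0) → x = 0) (i : σ) :
    ∃ m : ℕ, X i ^ m ∈ Ideal.span s := by
  change X i ∈ (Ideal.span s).radical
  rw [← vanishingIdeal_zeroLocus_eq_radical (K := k), mem_vanishingIdeal_iff]
  intro x hx
  simp only [zeroLocus_span, Set.mem_ofPred_eq, aeval_eq_eval] at hx
  simp [hs x hx]

theorem isSMulRegular_quotient_span_range_of_forall_eval_eq_zero {k : Type*} [Field k]
    [IsAlgClosed k] {n : ℕ} {y : MvPolynomial (Fin (n + 1)) k}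
    {G : Fin n → MvPolynomial (Fin (n + 1)) k}
    (h : ∀ x, eval x y = 0 → (∀ i, eval x (G i) = 0) → x = 0) :
    IsSMulRegular (MvPolynomial (Fin (n + 1)) k ⧸ Ideal.span (Set.range G)) y := by
  choose m hm using exists_X_pow_mem_span (s := insert y (Set.range G)) fun x hx =>
    h x (hx y (Set.mem_insert _ _)) fun i => hx _ (Set.mem_insert_of_mem _ ⟨i, rfl⟩)
  refine isSMulRegular_quotient_span_range_of_isWeaklyRegular
    (isWeaklyRegular_map_X_pow k (List.nodup_finRange (n + 1)) m) ?_ (by simp)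
  simpa using hm

/-! ### Shifts and degree-preserving endomorphisms -/

section PolynomialAction

open scoped Polynomial

section

variable {R V U ι : Type*} [CommRing R] [AddCommGroup V] [Module R V] [AddCommGroup U] [Module R U]
  {T : Module.End R V} {ρ : V →ₗ[R] U} {v : ι → V}

theorem linearIndependent_aevalOf (hT : Function.Injective T) (hρ : ∀ x, ρ (T x) = 0)
    (hv : LinearIndependent R (ρ ∘ v)) :
    LinearIndependent R[X] fun i => Module.AEval'.of T (v i) := by
  suffices h : ∀ (m : ℕ) (s : Finset ι) (p : ι → R[X]),
      ∑ i ∈ s, Polynomial.aeval T (p i) (v i) = 0 → ∀ i ∈ s, (p i).coeff m = 0 by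
    refine linearIndependent_iff'.2 fun s p hp i hi => Polynomial.ext fun m => h m s p ?_ i hi
    apply (Module.AEval'.of T).injective
    simpa [← Module.AEval.of_aeval_smul] using hp
  have hsplit (p : R[X]) (x : V) :
      Polynomial.aeval T p x = T (Polynomial.aeval T p.divX x) + p.coeff 0 • x := by
    conv_lhs => rw [← Polynomial.X_mul_divX_add p]
    simp only [map_add, map_mul, Polynomial.aeval_X, Polynomial.aeval_C,
      LinearMap.add_apply, Module.End.mul_apply, Module.algebraMap_end_apply]
  intro m s
  have hconst (p : ι → R[X]) (hp : ∑ i ∈ s, Polynomial.aeval T (p i) (v i) = 0) :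
      ∀ i ∈ s, (p i).coeff 0 = 0 := by
    refine linearIndependent_iff'.1 hv s (fun i => (p i).coeff 0) ?_
    simpa [hsplit (p _), hρ] using congrArg ρ hp
  induction m with
  | zero => exact hconst
  | succ m ih =>
    intro p hp
    have hdiv : ∑ i ∈ s, Polynomial.aeval T (p i).divX (v i) = 0 := by
      apply hT
      rw [map_sum, map_zero, ← hp]
      exact Finset.sum_congr rfl fun i hi => by
        rw [hsplit (p i), hconst p hp i hi, zero_smul, add_zero]
    simpa [Polynomial.coeff_divX] using ih (fun i => (p i).divX) hdiv

theorem linearIndependent_pow_apply (hT : Function.Injective T) (hρ : ∀ x, ρ (T x) = 0)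
    (hv : LinearIndependent R (ρ ∘ v)) :
    LinearIndependent R fun q : ι × ℕ => (T ^ q.2) (v q.1) := by
  rw [← LinearMap.linearIndependent_iff (Module.AEval'.of T).toLinearMap (LinearEquiv.ker _)]
  have h := linearIndependent_smul (S := R[X]) (A := Module.AEval' T)
    (Polynomial.basisMonomials R).linearIndependent (linearIndependent_aevalOf hT hρ hv)
  simpa [Function.comp_def, ← Polynomial.X_pow_eq_monomial, Module.AEval'.X_pow_smul_of] using
    h.comp Prod.swap Prod.swap_injective
end

theorem spectrum_finite_of_isIntegral {k A : Type*} [Field k] [Ring A] [Algebra k A] {a : A}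
    (ha : IsIntegral k a) : (spectrum k a).Finite := by
  cases subsingleton_or_nontrivial A
  · simp [spectrum.of_subsingleton]
  obtain ⟨p, hp, hpa⟩ := ha
  refine (p.rootSet_finite k).subset fun c hc => ?_
  have := spectrum.subset_polynomial_aeval a p ⟨c, hc, rfl⟩
  rw [Polynomial.aeval_def, hpa, spectrum.zero_eq] at this
  exact Polynomial.mem_rootSet.2 ⟨hp.ne_zero, by simpa using this⟩

section

variable {k M : Type*} [Field k] [AddCommGroup M] [Module k M]

theorem aeval_apply_of_comp_eq {R N M : Type*} [CommRing R] [AddCommGroup N] [Module R N]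
    [AddCommGroup M] [Module R M] {f : Module.End R N} {φ : Module.End R M} {j : N →ₗ[R] M}
    (h : φ ∘ₗ j = j ∘ₗ f) (p : R[X]) (x : N) :
    Polynomial.aeval φ p (j x) = j (Polynomial.aeval f p x) := by
  induction p using Polynomial.induction_on' with
  | add p q hp hq => simp [hp, hq]
  | monomial n a =>
    have hn := LinearMap.congr_fun (Module.End.commute_pow_left_of_commute h n) x
    simpa [Polynomial.aeval_monomial, Module.algebraMap_end_apply] using congrArg (a • ·) hn

theorem isIntegral_end_of_eventually_commute {φ T : Module.End k M} {W : ℕ → Submodule k M}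
    [∀ m, FiniteDimensional k (W m)] (hW : ⨆ m, W m = ⊤) (hφ : ∀ m, ∀ x ∈ W m, φ x ∈ W m)
    {K : ℕ} (hT : ∀ m, K ≤ m → W (m + 1) ≤ (W m).map T)
    (hcomm : ∀ m, K ≤ m → ∀ x ∈ W m, φ (T x) = T (φ x)) : IsIntegral k φ := by
  let U : Submodule k M := ⨆ m : Fin (K + 1), W m
  have hWU {m : ℕ} (hm : m ≤ K) : W m ≤ U := le_iSup (fun m : Fin (K + 1) => W m) ⟨m, by omega⟩
  have hφU : ∀ x ∈ U, φ x ∈ U := by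
    change U ≤ U.comap φ
    exact iSup_le fun m x hx => hWU m.is_le (hφ m x hx)
  let p := (φ.restrict hφU).charpoly
  refine ⟨p, LinearMap.charpoly_monic _, ?_⟩
  suffices h : ∀ m, W m ≤ LinearMap.ker (Polynomial.aeval φ p) by
    exact LinearMap.ker_eq_top.1 (top_le_iff.1 (hW ▸ iSup_le h))
  have hcommp (m : ℕ) (hm : K ≤ m) (x : M) (hx : x ∈ W m) :
      Polynomial.aeval φ p (T x) = T (Polynomial.aeval φ p x) :=
    calc Polynomial.aeval φ p (T x) = T ↑(Polynomial.aeval (φ.restrict (hφ m)) p ⟨x, hx⟩) :=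
          aeval_apply_of_comp_eq (j := T ∘ₗ (W m).subtype)
            (LinearMap.ext fun y => hcomm m hm y y.2) p ⟨x, hx⟩
      _ = T (Polynomial.aeval φ p x) :=
          congrArg T (aeval_apply_of_comp_eq (j := (W m).subtype) rfl p ⟨x, hx⟩).symm
  have hlow (m : ℕ) (hm : m ≤ K) : W m ≤ LinearMap.ker (Polynomial.aeval φ p) := fun x hx => by
    have hx := aeval_apply_of_comp_eq (f := φ.restrict hφU) (j := U.subtype) rfl p ⟨x, hWU hm hx⟩
    rwa [LinearMap.aeval_self_charpoly] at hx
  intro m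
  rcases le_total m K with hm | hm
  · exact hlow m hm
  induction m, hm using Nat.le_induction with
  | base => exact hlow K le_rfl
  | succ m hm ih =>
    intro y hy
    obtain ⟨x, hx, rfl⟩ := hT m hm hy
    rw [LinearMap.mem_ker, hcommp m hm x hx, ih hx, map_zero]
end

section

variable {R M : Type*} [CommRing R] [AddCommGroup M] [Module R M]

theorem isCompl_ker_range_of_bijective_comp {N P : Type*} [AddCommGroup N] [Module R N]
    [AddCommGroup P] [Module R P] {f : M →ₗ[R] P} {L : N →ₗ[R] M}
    (h : Function.Bijective (f ∘ₗ L)) : IsCompl (LinearMap.ker f) (LinearMap.range L) := by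
  refine ⟨Submodule.disjoint_def.2 ?_, codisjoint_iff.2 (eq_top_iff.2 fun x _ => ?_)⟩
  · rintro _ hx ⟨y, rfl⟩
    rw [h.1 (hx.trans (map_zero _).symm), map_zero]
  · obtain ⟨y, hy⟩ := h.2 (f x)
    refine Submodule.mem_sup.2 ⟨x - L y, ?_, L y, ⟨y, rfl⟩, sub_add_cancel _ _⟩
    rw [LinearMap.mem_ker, map_sub, ← hy, LinearMap.comp_apply, sub_self]

variable {ι : Type*} (e : Module.Basis (ι × ℕ) R M)

/-- Division by `T ^ r` for the shift `T : e (i, a) ↦ e (i, a + 1)` of a basis indexed by `ι × ℕ`,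
with remainder spanned by the `e (i, a)`, `a < r`, discarded. -/
def divShift (r : ℕ) : Module.End R M :=
  e.constr R fun q => if r ≤ q.2 then e (q.1, q.2 - r) else 0

/-- The piece of degree `m` for the grading in which `e (i, a)` has degree `a + δ i`. -/
def shiftDegree (δ : ι → ℕ) (m : ℕ) : Submodule R M :=
  Submodule.span R (e '' {q | q.2 + δ q.1 = m})

theorem divShift_basis_of_le {r a : ℕ} (h : r ≤ a) (i : ι) :
    divShift e r (e (i, a)) = e (i, a - r) := by
  rw [divShift, e.constr_basis, if_pos h]

theorem divShift_basis_of_lt {r a : ℕ} (h : a < r) (i : ι) : divShift e r (e (i, a)) = 0 := by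
  rw [divShift, e.constr_basis, if_neg h.not_ge]

variable {e} {T : Module.End R M}

theorem shift_pow_basis (hT : ∀ i a, T (e (i, a)) = e (i, a + 1)) (r : ℕ) (i : ι) (a : ℕ) :
    (T ^ r) (e (i, a)) = e (i, a + r) := by
  induction r with
  | zero => rfl
  | succ r ih => rw [pow_succ', Module.End.mul_apply, ih, hT, add_assoc]

theorem divShift_mul_shift_pow (hT : ∀ i a, T (e (i, a)) = e (i, a + 1)) (r : ℕ) :
    divShift e r * T ^ r = 1 := by
  refine e.ext fun ⟨i, a⟩ => ?_
  rw [Module.End.mul_apply, shift_pow_basis hT, divShift_basis_of_le e (Nat.le_add_left r a),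
    Nat.add_sub_cancel, Module.End.one_apply]

variable (e) in
theorem ker_divShift (r : ℕ) :
    LinearMap.ker (divShift e r) = Submodule.span R (e '' {q | q.2 < r}) := by
  let T : Module.End R M := e.constr R fun q => e (q.1, q.2 + 1)
  have hT (i : ι) (a : ℕ) : T (e (i, a)) = e (i, a + 1) := e.constr_basis R _ _
  refine le_antisymm (fun x hx => ?_) (Submodule.span_le.2 ?_)
  · have hrem : ⊤ ≤ (Submodule.span R (e '' {q | q.2 < r})).comap (1 - T ^ r * divShift e r) := by
      rw [← e.span_eq, Submodule.span_le]
      rintro _ ⟨⟨i, a⟩, rfl⟩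
      rcases lt_or_ge a r with ha | ha
      · have : e (i, a) ∈ Submodule.span R (e '' {q | q.2 < r}) :=
          Submodule.subset_span ⟨(i, a), ha, rfl⟩
        simpa [divShift_basis_of_lt e ha] using this
      · simp [divShift_basis_of_le e ha, shift_pow_basis hT, Nat.sub_add_cancel ha]
    simpa [LinearMap.mem_ker.1 hx] using hrem (Submodule.mem_top (x := x))
  · rintro _ ⟨⟨i, a⟩, ha, rfl⟩
    exact divShift_basis_of_lt e ha i

variable {δ : ι → ℕ}

theorem divShift_mem_shiftDegree {r m : ℕ} {x : M} (hx : x ∈ shiftDegree e δ (m + r)) :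
    divShift e r x ∈ shiftDegree e δ m := by
  suffices h : shiftDegree e δ (m + r) ≤ (shiftDegree e δ m).comap (divShift e r) from h hx
  refine Submodule.span_le.2 ?_
  rintro _ ⟨⟨i, a⟩, ha, rfl⟩
  simp only [Set.mem_ofPred_eq] at ha
  rcases lt_or_ge a r with hr | hr
  · simp [divShift_basis_of_lt e hr]
  · rw [SetLike.mem_coe, Submodule.mem_comap, divShift_basis_of_le e hr]
    exact Submodule.subset_span ⟨(i, a - r), (by omega : a - r + δ i = m), rfl⟩

theorem shiftDegree_succ_le_map (hT : ∀ i a, T (e (i, a)) = e (i, a + 1)) {m : ℕ}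
    (hm : ∀ i, δ i ≤ m) : shiftDegree e δ (m + 1) ≤ (shiftDegree e δ m).map T := by
  refine Submodule.span_le.2 ?_
  rintro _ ⟨⟨i, a⟩, ha, rfl⟩
  simp only [Set.mem_ofPred_eq] at ha
  have := hm i
  obtain ⟨b, rfl⟩ := Nat.exists_eq_add_one.2 (show 0 < a by omega)
  exact ⟨e (i, b), Submodule.subset_span ⟨(i, b), (by omega : b + δ i = m), rfl⟩, hT i b⟩

theorem divShift_shift_of_mem_shiftDegree (hT : ∀ i a, T (e (i, a)) = e (i, a + 1)) {r m : ℕ}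
    (hm : ∀ i, δ i ≤ m) {x : M} (hx : x ∈ shiftDegree e δ (m + r)) :
    divShift e r (T x) = T (divShift e r x) := by
  suffices h : shiftDegree e δ (m + r) ≤ LinearMap.eqLocus (divShift e r ∘ₗ T) (T ∘ₗ divShift e r)
    from h hx
  refine Submodule.span_le.2 ?_
  rintro _ ⟨⟨i, a⟩, ha, rfl⟩
  simp only [Set.mem_ofPred_eq] at ha
  have := hm i
  have hr : r ≤ a := by omega
  simp [hT, divShift_basis_of_le e hr, divShift_basis_of_le e (hr.trans a.le_succ),
    Nat.sub_add_comm hr]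

end

section

variable {k M ι : Type*} [Field k] [AddCommGroup M] [Module k M] [Finite ι]
  {e : Module.Basis (ι × ℕ) k M} {T Q : Module.End k M} {δ : ι → ℕ}

variable (e δ) in
theorem finiteDimensional_shiftDegree (m : ℕ) : FiniteDimensional k (shiftDegree e δ m) := by
  refine FiniteDimensional.span_of_finite k (Set.Finite.image _ ?_)
  refine (Set.finite_univ.prod (Set.finite_Iic m)).subset fun q hq => ?_
  simp only [Set.mem_ofPred_eq] at hq
  exact ⟨trivial, (by omega : q.2 ≤ m)⟩

theorem isIntegral_divShift_mul (hT : ∀ i a, T (e (i, a)) = e (i, a + 1)) (hQT : Commute Q T)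
    {r : ℕ} (hQ : ∀ m, ∀ x ∈ shiftDegree e δ m, Q x ∈ shiftDegree e δ (m + r)) :
    IsIntegral k (divShift e r * Q) := by
  have := finiteDimensional_shiftDegree e δ
  obtain ⟨K, hK⟩ := Finite.bddAbove_range δ
  have hδ {m : ℕ} (hm : K ≤ m) (i : ι) : δ i ≤ m := (hK ⟨i, rfl⟩).trans hm
  refine isIntegral_end_of_eventually_commute (T := T) (W := shiftDegree e δ) (K := K) ?_
    (fun m x hx => divShift_mem_shiftDegree (hQ m x hx))
    (fun m hm => shiftDegree_succ_le_map hT (hδ hm)) fun m hm x hx => ?_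
  · rw [eq_top_iff, ← e.span_eq, Submodule.span_le]
    rintro _ ⟨q, rfl⟩
    exact Submodule.mem_iSup_of_mem _ (Submodule.subset_span ⟨q, rfl, rfl⟩)
  · rw [Module.End.mul_apply, Module.End.mul_apply,
      ← divShift_shift_of_mem_shiftDegree hT (hδ hm) (hQ m x hx)]
    exact congrArg _ (LinearMap.congr_fun hQT x)

theorem eventually_cofinite_isCompl_range_sub_shift_pow
    (hT : ∀ i a, T (e (i, a)) = e (i, a + 1)) (hQT : Commute Q T) {r : ℕ}
    (hQ : ∀ m, ∀ x ∈ shiftDegree e δ m, Q x ∈ shiftDegree e δ (m + r)) :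
    ∀ᶠ c : k in Filter.cofinite, IsCompl (Submodule.span k (e '' {q | q.2 < r}))
      (LinearMap.range (Q - c • T ^ r)) := by
  filter_upwards [(spectrum_finite_of_isIntegral
    (isIntegral_divShift_mul hT hQT hQ)).compl_mem_cofinite] with c hc
  have hcomp : divShift e r * (Q - c • T ^ r) = divShift e r * Q - algebraMap k _ c := by
    rw [mul_sub, mul_smul_comm, divShift_mul_shift_pow hT, Algebra.algebraMap_eq_smul_one]
  rw [Set.mem_compl_iff, spectrum.notMem_iff, ← IsUnit.neg_iff, neg_sub, ← hcomp,
    Module.End.isUnit_iff] at hc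
  simpa only [← ker_divShift] using isCompl_ker_range_of_bijective_comp hc

end

end PolynomialAction

/-! ### Restriction to the hyperplane at infinity -/

attribute [local instance] weightedGradedAlgebra

section

variable {σ R : Type*} [CommRing R] {w : σ → ℕ} {d : ℕ} {p : MvPolynomial σ R}

theorem weightedHomogeneousComponent_mul_of_isWeightedHomogeneous
    (hp : IsWeightedHomogeneous w p d) (q : MvPolynomial σ R) (m : ℕ) :
    weightedHomogeneousComponent w m (p * q) =
      if d ≤ m then p * weightedHomogeneousComponent w (m - d) q else 0 := by
  simp only [← weightedDecomposition.decompose'_apply]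
  exact DirectSum.coe_decompose_mul_of_left_mem (weightedHomogeneousSubmodule R w) m hp

theorem pderiv_eq_zero_of_lt (hp : IsWeightedHomogeneous w p d) {i : σ} (hi : d < w i) :
    pderiv i p = 0 := by
  ext t
  rw [coeff_pderiv, hp.coeff_eq_zero, zero_mul, coeff_zero]
  rw [map_add, Finsupp.weight_single, one_smul]
  omega

theorem isHomogeneousElem_pderiv (hp : IsWeightedHomogeneous w p d) (i : σ) :
    SetLike.IsHomogeneousElem (weightedHomogeneousSubmodule R w) (pderiv i p) := by
  rcases le_or_gt (w i) d with hi | hi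
  · exact ⟨d - w i, hp.pderiv (Nat.sub_add_cancel hi)⟩
  · rw [pderiv_eq_zero_of_lt hp hi]
    exact ⟨0, zero_mem _⟩

theorem isWeightedHomogeneous_rename {τ : Type*} {f : τ → σ} {p : MvPolynomial τ R}
    (hp : IsWeightedHomogeneous (w ∘ f) p d) : IsWeightedHomogeneous w (rename f p) d := by
  intro t ht
  obtain ⟨u, rfl, hu⟩ := coeff_rename_ne_zero f p t ht
  rw [← hp hu]
  simp [Finsupp.weight_apply, Finsupp.sum_mapDomain_index, add_mul]

theorem pos_of_forall_eval_pderiv_eq_zero [Nonempty σ] [Nontrivial R] (hw : ∀ i, 0 < w i)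
    (hp : IsWeightedHomogeneous w p d)
    (htame : ∀ x : σ → R, (∀ i, eval x (pderiv i p) = 0) → x = 0) : 0 < d := by
  rw [pos_iff_ne_zero]
  rintro rfl
  exact one_ne_zero (htame 1 fun i => by rw [pderiv_eq_zero_of_lt hp (hw i), map_zero])

end

section

variable {R : Type*} [CommRing R] {n : ℕ}

/-- The restriction of a polynomial in `x₀, …, xₙ` to the hyperplane at infinity `x₀ = 0`, which
takes the homogenization of `f` to the last quasi-homogeneous part of `f`. -/
def restrictInfinity : MvPolynomial (Fin (n + 1)) R →ₐ[R] MvPolynomial (Fin n) R :=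
  aeval (vecCons 0 X)

theorem restrictInfinity_X_zero : restrictInfinity (X 0 : MvPolynomial (Fin (n + 1)) R) = 0 := by
  simp [restrictInfinity]

theorem restrictInfinity_rename_succ (p : MvPolynomial (Fin n) R) :
    restrictInfinity (rename Fin.succ p) = p := by
  rw [restrictInfinity, aeval_rename]
  exact aeval_X_left_apply p

theorem restrictInfinity_surjective :
    Function.Surjective (restrictInfinity : MvPolynomial (Fin (n + 1)) R →ₐ[R] _) :=
  fun p => ⟨_, restrictInfinity_rename_succ p⟩

theorem X_zero_dvd_of_restrictInfinity_eq_zero {p : MvPolynomial (Fin (n + 1)) R}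
    (hp : restrictInfinity p = 0) : X 0 ∣ p := by
  let π := Ideal.Quotient.mkₐ R (Ideal.span {(X 0 : MvPolynomial (Fin (n + 1)) R)})
  have hπ : π = (π.comp (rename Fin.succ)).comp restrictInfinity := by
    refine algHom_ext fun i => Fin.cases ?_ (fun i => ?_) i
    · rw [AlgHom.comp_apply, restrictInfinity_X_zero, map_zero]
      exact Ideal.Quotient.eq_zero_iff_mem.2 (Ideal.mem_span_singleton_self _)
    · simp [restrictInfinity]
  rw [← Ideal.mem_span_singleton, ← Ideal.Quotient.eq_zero_iff_mem]
  exact (DFunLike.congr_fun hπ p).trans (by simp only [AlgHom.comp_apply, hp, map_zero])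

theorem eval_tail_restrictInfinity {x : Fin (n + 1) → R} (hx : x 0 = 0)
    (p : MvPolynomial (Fin (n + 1)) R) : eval (Fin.tail x) (restrictInfinity p) = eval x p := by
  have h : (aeval (R := R) (Fin.tail x)).comp restrictInfinity = aeval x :=
    algHom_ext fun i => Fin.cases (by simp [restrictInfinity, hx])
      (fun i => by simp [restrictInfinity, Fin.tail]) i
  simpa [aeval_eq_eval] using DFunLike.congr_fun h p

theorem restrictInfinity_pderiv_succ (i : Fin n) (p : MvPolynomial (Fin (n + 1)) R) :
    restrictInfinity (pderiv i.succ p) = pderiv i (restrictInfinity p) := by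
  induction p using MvPolynomial.induction_on with
  | C a => simp [restrictInfinity]
  | add p q hp hq => simp [hp, hq]
  | mul_X p j hp =>
    refine Fin.cases ?_ (fun j => ?_) j
    · simp [restrictInfinity_X_zero]
    · rw [← rename_X Fin.succ j]
      simp only [pderiv_mul, map_add, map_mul, hp, pderiv_rename (Fin.succ_injective n),
        restrictInfinity_rename_succ]

theorem isWeightedHomogeneous_X_zero_pow (α : Fin n → ℕ) (m : ℕ) :
    IsWeightedHomogeneous (vecCons 1 α) (X 0 ^ m : MvPolynomial (Fin (n + 1)) R) m := by
  simpa using (isWeightedHomogeneous_X R (vecCons 1 α) 0).pow m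

theorem isSMulRegular_X_zero_of_restrictInfinity {k : Type*} [Field k] [IsAlgClosed k]
    {G : Fin n → MvPolynomial (Fin (n + 1)) k}
    (h : ∀ x, (∀ i, eval x (restrictInfinity (G i)) = 0) → x = 0) :
    IsSMulRegular (MvPolynomial (Fin (n + 1)) k ⧸ Ideal.span (Set.range G))
      (X 0 : MvPolynomial (Fin (n + 1)) k) := by
  refine isSMulRegular_quotient_span_range_of_forall_eval_eq_zero fun x hx hG => ?_
  rw [eval_X] at hx
  have htail := h (Fin.tail x) fun i => by rw [eval_tail_restrictInfinity hx, hG]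
  rw [← Fin.cons_self_tail x, hx, htail]
  exact funext (Fin.cases rfl fun _ => rfl)

end

/-! ### Monomial bases of the quotients -/

section Basis

variable {R ι : Type*} [CommRing R] {n : ℕ} {J : Ideal (MvPolynomial (Fin (n + 1)) R)}
  {v : ι → MvPolynomial (Fin n) R}

theorem linearIndependent_mk_X_zero_pow_mul
    (hreg : IsSMulRegular (MvPolynomial (Fin (n + 1)) R ⧸ J) (X 0 : MvPolynomial (Fin (n + 1)) R))
    (hv : LinearIndependent R fun i => Ideal.Quotient.mk (J.map restrictInfinity) (v i)) :
    LinearIndependent R fun q : ι × ℕ =>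
      Ideal.Quotient.mk J (X 0 ^ q.2 * rename Fin.succ (v q.1)) := by
  let T : Module.End R (MvPolynomial (Fin (n + 1)) R ⧸ J) :=
    Algebra.lsmul R R _ (X 0 : MvPolynomial (Fin (n + 1)) R)
  let ρ := Ideal.quotientMapₐ (J.map restrictInfinity) restrictInfinity Ideal.le_comap_map
  have hρ (p : MvPolynomial (Fin (n + 1)) R) :
      ρ (Ideal.Quotient.mk J p) = Ideal.Quotient.mk _ (restrictInfinity p) := rfl
  have hρT (x) : ρ.toLinearMap (T x) = 0 := by
    obtain ⟨p, rfl⟩ := Ideal.Quotient.mk_surjective x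
    change ρ (Ideal.Quotient.mk J (X 0 * p)) = 0
    rw [hρ, map_mul, restrictInfinity_X_zero, zero_mul, map_zero]
  have hli := linearIndependent_pow_apply (T := T)
    (v := fun i => Ideal.Quotient.mk J (rename Fin.succ (v i))) hreg hρT
    (by simpa [Function.comp_def, hρ, restrictInfinity_rename_succ] using hv)
  simp only [T, ← map_pow] at hli
  exact hli

variable {α : Fin n → ℕ} {δ : ι → ℕ}

theorem isWeightedHomogeneous_X_zero_pow_mul_rename
    (hδ : ∀ i, IsWeightedHomogeneous α (v i) (δ i)) (q : ι × ℕ) :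
    IsWeightedHomogeneous (vecCons 1 α) (X 0 ^ q.2 * rename Fin.succ (v q.1)) (q.2 + δ q.1) :=
  (isWeightedHomogeneous_X_zero_pow α q.2).mul (isWeightedHomogeneous_rename (hδ q.1))

theorem exists_eq_sum_add_X_zero_mul [Fintype ι]
    (hv : Submodule.span R
      (Set.range fun i => Ideal.Quotient.mk (J.map restrictInfinity) (v i)) = ⊤)
    (p : MvPolynomial (Fin (n + 1)) R) :
    ∃ (c : ι → R) (q : _), ∃ z ∈ J, p = ∑ i, c i • rename Fin.succ (v i) + z + X 0 * q := by
  obtain ⟨c, hc⟩ := (Submodule.mem_span_range_iff_exists_fun R).1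
    (hv ▸ Submodule.mem_top (x := Ideal.Quotient.mk _ (restrictInfinity p)))
  have hmem : restrictInfinity p - ∑ i, c i • v i ∈ J.map restrictInfinity := by
    rw [← Ideal.Quotient.eq, ← hc, map_sum]
    rfl
  obtain ⟨z, hz, hzp⟩ := (Ideal.mem_map_iff_of_surjective _ restrictInfinity_surjective).1 hmem
  obtain ⟨q, hq⟩ := X_zero_dvd_of_restrictInfinity_eq_zero
    (p := p - ∑ i, c i • rename Fin.succ (v i) - z)
    (by simp [hzp, restrictInfinity_rename_succ])
  exact ⟨c, q, z, hz, by rw [← hq]; ring⟩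

theorem mk_weightedHomogeneousComponent_rename_mem_span
    (hδ : ∀ i, IsWeightedHomogeneous α (v i) (δ i)) (m : ℕ) (i : ι) :
    Ideal.Quotient.mk J (weightedHomogeneousComponent (vecCons 1 α) m (rename Fin.succ (v i))) ∈
      Submodule.span R
        ((fun q : ι × ℕ => Ideal.Quotient.mk J (X 0 ^ q.2 * rename Fin.succ (v q.1))) ''
          {q | q.2 + δ q.1 = m}) := by
  have hi : IsWeightedHomogeneous (vecCons 1 α) (rename Fin.succ (v i)) (δ i) :=
    isWeightedHomogeneous_rename (hδ i)
  rcases eq_or_ne m (δ i) with rfl | hm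
  · rw [hi.weightedHomogeneousComponent_same]
    exact Submodule.subset_span ⟨(i, 0), zero_add _, by simp⟩
  · rw [hi.weightedHomogeneousComponent_ne m hm, map_zero]
    exact zero_mem _

theorem mk_X_zero_mul_mem_span {m : ℕ} {p : MvPolynomial (Fin (n + 1)) R}
    (hp : Ideal.Quotient.mk J p ∈ Submodule.span R
      ((fun q : ι × ℕ => Ideal.Quotient.mk J (X 0 ^ q.2 * rename Fin.succ (v q.1))) ''
        {q | q.2 + δ q.1 = m})) :
    Ideal.Quotient.mk J (X 0 * p) ∈ Submodule.span R
      ((fun q : ι × ℕ => Ideal.Quotient.mk J (X 0 ^ q.2 * rename Fin.succ (v q.1))) ''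
        {q | q.2 + δ q.1 = m + 1}) := by
  have hmul := Submodule.mem_map_of_mem (f := LinearMap.mulLeft R (Ideal.Quotient.mk J (X 0))) hp
  rw [Submodule.map_span, ← Set.image_comp, LinearMap.mulLeft_apply, ← map_mul] at hmul
  refine Submodule.span_mono ?_ hmul
  rintro _ ⟨⟨i, a⟩, ha, rfl⟩
  exact ⟨(i, a + 1), by rw [← ha.out, Set.mem_ofPred_eq, add_right_comm],
    by simp [pow_succ', mul_assoc]⟩

theorem mk_mem_span_of_isWeightedHomogeneous [Finite ι]
    (hJ : J.IsHomogeneous (weightedHomogeneousSubmodule R (vecCons 1 α)))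
    (hδ : ∀ i, IsWeightedHomogeneous α (v i) (δ i))
    (hv : Submodule.span R
      (Set.range fun i => Ideal.Quotient.mk (J.map restrictInfinity) (v i)) = ⊤)
    {m : ℕ} {p : MvPolynomial (Fin (n + 1)) R} (hp : IsWeightedHomogeneous (vecCons 1 α) p m) :
    Ideal.Quotient.mk J p ∈ Submodule.span R
      ((fun q : ι × ℕ => Ideal.Quotient.mk J (X 0 ^ q.2 * rename Fin.succ (v q.1))) ''
        {q | q.2 + δ q.1 = m}) := by
  have := Fintype.ofFinite ι
  induction m using Nat.strong_induction_on generalizing p with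
  | _ m ih =>
  have hX : IsWeightedHomogeneous (vecCons 1 α) (X 0 : MvPolynomial (Fin (n + 1)) R) 1 :=
    isWeightedHomogeneous_X R (vecCons 1 α) 0
  obtain ⟨c, q, z, hz, hpq⟩ := exists_eq_sum_add_X_zero_mul hv p
  have hzm := weightedHomogeneousComponent_mem_of_mem R _ hJ hz m
  rw [← hp.weightedHomogeneousComponent_same, hpq]
  simp only [map_add, map_sum, map_smul, Ideal.Quotient.eq_zero_iff_mem.2 hzm, add_zero,
    weightedHomogeneousComponent_mul_of_isWeightedHomogeneous hX]
  refine add_mem (Submodule.sum_mem _ fun i _ => ?_) ?_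
  · exact Submodule.smul_mem _ (c i) (mk_weightedHomogeneousComponent_rename_mem_span hδ m i)
  · rcases le_or_gt 1 m with hm | hm
    · have hq := mk_X_zero_mul_mem_span (ih (m - 1) (by omega)
        (weightedHomogeneousComponent_isWeightedHomogeneous (m - 1) q))
      rw [if_pos hm]
      rwa [Nat.sub_add_cancel hm] at hq
    · rw [if_neg hm.not_ge, map_zero]
      exact zero_mem _

theorem span_range_mk_X_zero_pow_mul [Finite ι]
    (hJ : J.IsHomogeneous (weightedHomogeneousSubmodule R (vecCons 1 α)))
    (hδ : ∀ i, IsWeightedHomogeneous α (v i) (δ i))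
    (hv : Submodule.span R
      (Set.range fun i => Ideal.Quotient.mk (J.map restrictInfinity) (v i)) = ⊤) :
    Submodule.span R (Set.range fun q : ι × ℕ =>
      Ideal.Quotient.mk J (X 0 ^ q.2 * rename Fin.succ (v q.1))) = ⊤ := by
  rw [eq_top_iff]
  rintro x -
  obtain ⟨p, rfl⟩ := Ideal.Quotient.mk_surjective x
  rw [p.as_sum, map_sum]
  exact Submodule.sum_mem _ fun t _ => Submodule.span_mono (Set.image_subset_range _ _)
    (mk_mem_span_of_isWeightedHomogeneous hJ hδ hv (isWeightedHomogeneous_monomial _ t _ rfl))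

end Basis

section

theorem linearIndependent_and_span_comp_of_isCompl_ker {R M N ι : Type*} [Ring R] [AddCommGroup M]
    [Module R M] [AddCommGroup N] [Module R N] {L : M →ₗ[R] N} {v : ι → M}
    (hv : LinearIndependent R v) (hL : Function.Surjective L)
    (h : IsCompl (Submodule.span R (Set.range v)) (LinearMap.ker L)) :
    LinearIndependent R (L ∘ v) ∧ Submodule.span R (Set.range (L ∘ v)) = ⊤ := by
  refine ⟨hv.map h.disjoint, ?_⟩
  rw [Set.range_comp, ← Submodule.map_span, ← LinearMap.range_eq_top.2 hL,
    ← Submodule.map_top, ← h.sup_eq_top, Submodule.map_sup,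
    LinearMap.le_ker_iff_map.1 le_rfl, sup_bot_eq]

theorem ker_factor_sup_span_singleton {R A : Type*} [CommRing R] [CommRing A] [Algebra R A]
    (J : Ideal A) (P : A) :
    LinearMap.ker (Ideal.Quotient.factorₐ R (le_sup_left : J ≤ J ⊔ Ideal.span {P})).toLinearMap =
      LinearMap.range (Algebra.lsmul R R (A ⧸ J) P) := by
  ext x
  obtain ⟨x, rfl⟩ := Ideal.Quotient.mk_surjective x
  change Ideal.Quotient.mk (J ⊔ Ideal.span {P}) x = 0 ↔ ∃ y, Ideal.Quotient.mk J P * y = _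
  rw [Ideal.Quotient.eq_zero_iff_mem, sup_comm, ← Ideal.mem_quotient_iff_mem_sup, Ideal.map_span,
    Set.image_singleton, Ideal.mem_span_singleton]
  exact exists_congr fun y => eq_comm

variable {k ι : Type*} [Field k] [Finite ι] {n r : ℕ} {α : Fin n → ℕ} {δ : ι → ℕ}
  {J : Ideal (MvPolynomial (Fin (n + 1)) k)} {v : ι → MvPolynomial (Fin n) k}
  {Q : MvPolynomial (Fin (n + 1)) k}

theorem eventually_cofinite_basis_mk_sup_span_sub
    (hJ : J.IsHomogeneous (weightedHomogeneousSubmodule k (vecCons 1 α)))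
    (hreg : IsSMulRegular (MvPolynomial (Fin (n + 1)) k ⧸ J) (X 0 : MvPolynomial (Fin (n + 1)) k))
    (hδ : ∀ i, IsWeightedHomogeneous α (v i) (δ i))
    (hli : LinearIndependent k fun i => Ideal.Quotient.mk (J.map restrictInfinity) (v i))
    (hspan : Submodule.span k
      (Set.range fun i => Ideal.Quotient.mk (J.map restrictInfinity) (v i)) = ⊤)
    (hQ : IsWeightedHomogeneous (vecCons 1 α) Q r) :
    ∀ᶠ c in Filter.cofinite,
      LinearIndependent k (fun q : ι × Fin r =>
        Ideal.Quotient.mk (J ⊔ Ideal.span {Q - C c * X 0 ^ r})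
          (X 0 ^ (q.2 : ℕ) * rename Fin.succ (v q.1))) ∧
      Submodule.span k (Set.range fun q : ι × Fin r =>
        Ideal.Quotient.mk (J ⊔ Ideal.span {Q - C c * X 0 ^ r})
          (X 0 ^ (q.2 : ℕ) * rename Fin.succ (v q.1))) = ⊤ := by
  let e : Module.Basis (ι × ℕ) k (MvPolynomial (Fin (n + 1)) k ⧸ J) :=
    .mk (linearIndependent_mk_X_zero_pow_mul hreg hli)
      (span_range_mk_X_zero_pow_mul hJ hδ hspan).ge
  have he : e = fun q : ι × ℕ => Ideal.Quotient.mk J (X 0 ^ q.2 * rename Fin.succ (v q.1)) :=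
    Module.Basis.coe_mk _ _
  let μ : MvPolynomial (Fin (n + 1)) k →ₐ[k] Module.End k (MvPolynomial (Fin (n + 1)) k ⧸ J) :=
    Algebra.lsmul k k _
  have hμ (p q : MvPolynomial (Fin (n + 1)) k) :
      μ p (Ideal.Quotient.mk J q) = Ideal.Quotient.mk J (p * q) := rfl
  have hT (i : ι) (a : ℕ) : μ (X 0) (e (i, a)) = e (i, a + 1) := by
    simp only [he, hμ, pow_succ', mul_assoc]
  have hQdeg (m : ℕ) : ∀ x ∈ shiftDegree e δ m, μ Q x ∈ shiftDegree e δ (m + r) := by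
    refine Submodule.span_le (p := (shiftDegree e δ (m + r)).comap (μ Q)).2 ?_
    rintro _ ⟨q, rfl, rfl⟩
    rw [SetLike.mem_coe, Submodule.mem_comap, shiftDegree, he, hμ, add_comm _ r]
    exact mk_mem_span_of_isWeightedHomogeneous hJ hδ hspan
      (hQ.mul (isWeightedHomogeneous_X_zero_pow_mul_rename hδ q))
  filter_upwards [eventually_cofinite_isCompl_range_sub_shift_pow hT
    ((Commute.all Q (X 0)).map μ) hQdeg] with c hc
  have hmul : μ Q - c • μ (X 0) ^ r = μ (Q - C c * X 0 ^ r) := by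
    rw [← smul_eq_C_mul, map_sub, map_smul, map_pow]
  have hrange : e '' {q | q.2 < r} = Set.range (e ∘ Prod.map id ((↑) : Fin r → ℕ)) := by
    rw [Set.range_comp, Set.range_prodMap, Set.range_id, Fin.range_val]
    congr 1
    ext q
    simp
  rw [hmul, hrange, ← ker_factor_sup_span_singleton] at hc
  have hbasis := linearIndependent_and_span_comp_of_isCompl_ker
    (e.linearIndependent.comp _ (Function.injective_id.prodMap Fin.val_injective))
    (Ideal.Quotient.factor_surjective le_sup_left) hc
  rw [he] at hbasis
  exact hbasis

end

/-! ### Homogenizations -/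

section

variable (n d : ℕ) (α : Fin (n + 1) → ℕ) (f : MvPolynomial (Fin (n + 1)) ℂ)

theorem isWeightedHomogeneous_homogenization :
    IsWeightedHomogeneous (vecCons 1 α) (homogenization n d α f) d := by
  refine IsWeightedHomogeneous.sum _ _ _ fun i hi => ?_
  have h := (isWeightedHomogeneous_rename (w := vecCons 1 α) (f := Fin.succ)
    (weightedHomogeneousComponent_isWeightedHomogeneous (w := α) i f)).mul
    (isWeightedHomogeneous_X_zero_pow α (d - i))
  rwa [Nat.add_sub_cancel' (Finset.mem_range_succ_iff.1 hi)] at h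

theorem restrictInfinity_homogenization :
    restrictInfinity (homogenization n d α f) = weightedHomogeneousComponent α d f := by
  simp only [homogenization, map_sum, map_mul, map_pow, restrictInfinity_X_zero,
    restrictInfinity_rename_succ]
  rw [Finset.sum_range_succ, Finset.sum_eq_zero, zero_add, Nat.sub_self, pow_zero, mul_one]
  intro i hi
  rw [zero_pow (Nat.sub_ne_zero_of_lt (Finset.mem_range.1 hi)), mul_zero]

/-- The ideal generated by the derivatives of the homogenization `F` in all variables but `x₀`. It
is contained in `fullJacobianIdeal n d α f b` for every `b`. -/
def tailJacobianIdeal : Ideal (MvPolynomial (Fin (n + 2)) ℂ) :=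
  Ideal.span (Set.range fun i : Fin (n + 1) => pderiv i.succ (homogenization n d α f))

theorem isHomogeneous_tailJacobianIdeal : (tailJacobianIdeal n d α f).IsHomogeneous
    (weightedHomogeneousSubmodule ℂ (vecCons 1 α)) :=
  Ideal.homogeneous_span _ _ (Set.forall_mem_range.2 fun i =>
    isHomogeneousElem_pderiv (isWeightedHomogeneous_homogenization n d α f) i.succ)

theorem map_restrictInfinity_tailJacobianIdeal :
    (tailJacobianIdeal n d α f).map restrictInfinity =
      Ideal.span (Set.range fun i => pderiv i (weightedHomogeneousComponent α d f)) := by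
  simp only [tailJacobianIdeal, Ideal.map_span, ← Set.range_comp, Function.comp_def,
    restrictInfinity_pderiv_succ, restrictInfinity_homogenization]

variable {n d α f} in
theorem isSMulRegular_X_zero_quotient_tailJacobianIdeal (htame : ∀ x : Fin (n + 1) → ℂ,
      (∀ i, eval x (pderiv i (weightedHomogeneousComponent α d f)) = 0) → x = 0) :
    IsSMulRegular (MvPolynomial (Fin (n + 2)) ℂ ⧸ tailJacobianIdeal n d α f)
      (X 0 : MvPolynomial (Fin (n + 2)) ℂ) :=
  isSMulRegular_X_zero_of_restrictInfinity (by
    simpa only [restrictInfinity_pderiv_succ, restrictInfinity_homogenization])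

theorem fullJacobianIdeal_eq_sup (b : ℂ) :
    fullJacobianIdeal n d α f b =
      tailJacobianIdeal n d α f ⊔
        Ideal.span {pderiv 0 (homogenization n d α f) - C (b * d) * X 0 ^ (d - 1)} := by
  have hzero : pderiv 0 (homogenization n d α f - C b * X 0 ^ d) =
      pderiv 0 (homogenization n d α f) - C (b * d) * X 0 ^ (d - 1) := by
    simp [mul_assoc]
  have hsucc (i : Fin (n + 1)) : pderiv i.succ (homogenization n d α f - C b * X 0 ^ d) =
      pderiv i.succ (homogenization n d α f) := by
    simp [pderiv_X_of_ne (Fin.succ_ne_zero i).symm]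
  rw [fullJacobianIdeal, ← Fin.cons_self_tail (fun i => pderiv i _), Fin.range_cons, hzero,
    Ideal.span_insert, sup_comm]
  simp only [Fin.tail_def, hsucc, tailJacobianIdeal]

end

/-- Let `f` be strongly tame of weighted degree `d` with homogenization
`F`, and let the monomials `x^β`, `β ∈ I`, be a ℂ-basis of `V_g`.  For all but finitely
many `b ∈ ℂ`, the monomials `x₀^j·x^β`, `β ∈ I`, `0 ≤ j ≤ d - 2`, form a ℂ-basis of
`ℂ[x₀,x]/⟨∂F_b/∂x₀,…,∂F_b/∂x_{n+1}⟩` with `F_b = F - b·x₀^d` (i.e. one can take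
`d_β = d - 1` for all `β` for a generic `b`). -/
theorem generic_dbeta_eq_d_sub_one
    (n : ℕ) (hn : 1 ≤ n) (α : Fin (n + 1) → ℕ)
    (hαpos : ∀ i, 0 < α i) (hα : Finset.univ.gcd α = 1)
    (f : MvPolynomial (Fin (n + 1)) ℂ) (d : ℕ)
    (hd : MvPolynomial.weightedTotalDegree α f = d)
    (g : MvPolynomial (Fin (n + 1)) ℂ)
    (hg : g = weightedHomogeneousComponent α d f)
    (hg0 : g ≠ 0)
    (htame : ∀ x : Fin (n + 1) → ℂ, (∀ i, eval x (pderiv i g) = 0) → x = 0)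
    (I : Finset (Fin (n + 1) →₀ ℕ))
    (hIindep : LinearIndependent ℂ (fun β : I =>
      Ideal.Quotient.mk (Ideal.span (Set.range fun i => pderiv i g))
        (monomial (β : Fin (n + 1) →₀ ℕ) (1 : ℂ))))
    (hIspan : Submodule.span ℂ (Set.range fun β : I =>
      Ideal.Quotient.mk (Ideal.span (Set.range fun i => pderiv i g))
        (monomial (β : Fin (n + 1) →₀ ℕ) (1 : ℂ))) = ⊤) :
    {b : ℂ | ¬ (LinearIndependent ℂ
        (fun q : I × Fin (d - 1) =>
          Ideal.Quotient.mk (fullJacobianIdeal n d α f b)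
            (X 0 ^ (q.2 : ℕ) *
              rename Fin.succ (monomial (q.1 : Fin (n + 1) →₀ ℕ) (1 : ℂ)))) ∧
      Submodule.span ℂ
        (Set.range fun q : I × Fin (d - 1) =>
          Ideal.Quotient.mk (fullJacobianIdeal n d α f b)
            (X 0 ^ (q.2 : ℕ) *
              rename Fin.succ (monomial (q.1 : Fin (n + 1) →₀ ℕ) (1 : ℂ)))) = ⊤)}.Finite := by
  subst hg
  have hdpos : 0 < d := pos_of_forall_eval_pderiv_eq_zero hαpos
    (weightedHomogeneousComponent_isWeightedHomogeneous d f) htame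
  have hP₀ : IsWeightedHomogeneous (vecCons 1 α) (pderiv 0 (homogenization n d α f)) (d - 1) :=
    (isWeightedHomogeneous_homogenization n d α f).pderiv (Nat.sub_add_cancel hdpos)
  have hβ (β : I) : IsWeightedHomogeneous α (monomial (β : Fin (n + 1) →₀ ℕ) (1 : ℂ))
      (Finsupp.weight α (β : Fin (n + 1) →₀ ℕ)) :=
    isWeightedHomogeneous_monomial α _ _ rfl
  rw [← map_restrictInfinity_tailJacobianIdeal] at hIindep hIspan
  have hbasis := eventually_cofinite_basis_mk_sup_span_sub (isHomogeneous_tailJacobianIdeal n d α f)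
    (isSMulRegular_X_zero_quotient_tailJacobianIdeal htame) hβ hIindep hIspan hP₀
  have hinj : Function.Injective fun b : ℂ => b * d :=
    mul_left_injective₀ (Nat.cast_ne_zero.2 hdpos.ne')
  refine (hinj.tendsto_cofinite.eventually hbasis).mono fun b hb => ?_
  rwa [fullJacobianIdeal_eq_sup]
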